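/- arXiv:1811.03827 — 3 statements merged into one kernel-verified Lean document; each statement's English description precedes it below -/
import Mathlib

section
/- Let μ and ν be two probability distributions on ℝ with finite first moments such that μ ≤_st ν or ν ≤_st μ. Then μ*ν ≼_cx (1/2)(μ*μ + ν*ν). -/
open MeasureTheory Set

noncomputable def distFun (μ : Measure ℝ) (x : ℝ) : ℝ := (μ (Set.Iic x)).toReal

/-- Convolution of two real functions with respect to Lebesgue measure. -/
noncomputable def fconv (h₁ h₂ : ℝ → ℝ) (A : ℝ) : ℝ := ∫ t, h₁ t * h₂ (A - t)

/-- Convex order for finite Borel measures on ℝ. -/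
def ConvexOrder (μ ν : Measure ℝ) : Prop :=
  ∀ φ : ℝ → ℝ, ConvexOn ℝ Set.univ φ → Integrable φ μ → Integrable φ ν →
    ∫ x, φ x ∂μ ≤ ∫ x, φ x ∂ν

/-- Usual stochastic order: `μ ≤ₛₜ ν`. -/
def StochOrder (μ ν : Measure ℝ) : Prop :=
  μ Set.univ = ν Set.univ ∧ ∀ x : ℝ, distFun ν x ≤ distFun μ x

/-- k-fold convolution power of a measure. -/
noncomputable def convPow (μ : Measure ℝ) : ℕ → Measure ℝ
  | 0 => Measure.dirac 0
  | n + 1 => Measure.conv (convPow μ n) μ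

/-- Convolution of a list of measures. -/
noncomputable def convList : List (Measure ℝ) → Measure ℝ
  | [] => Measure.dirac 0
  | m :: l => Measure.conv m (convList l)

/-- Convolution polynomial of measures associated with a multivariate polynomial
with non-negative coefficients. -/
noncomputable def convPoly {m : ℕ} (P : MvPolynomial (Fin m) ℝ) (μ : Fin m → Measure ℝ) :
    Measure ℝ :=
  ∑ d ∈ P.support,
    ENNReal.ofReal (MvPolynomial.coeff d P) • convList (List.ofFn fun i => convPow (μ i) (d i))

/-!
Realise `μ ≤_st ν` by a coupling `X ≤ Y` (the quantile coupling), and let `(X', Y')` be an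
independent copy of `(X, Y)`. For convex `φ` the function `(x, y) ↦ φ (x + y)` is supermodular, so
`φ (X + Y') + φ (Y + X') ≤ φ (X + X') + φ (Y + Y')`. Both sums on the left have law `μ ∗ ν`, those
on the right have laws `μ ∗ μ` and `ν ∗ ν`; taking expectations gives the claim.
-/

open Filter
open scoped Topology Convex

section Convex

variable {𝕜 E β : Type*} [Field 𝕜] [LinearOrder 𝕜] [AddCommGroup β] [PartialOrder β]
  [IsOrderedAddMonoid β] [Module 𝕜 β]

theorem convexOn_add_le_add_of_mem_segment [AddCommGroup E] [Module 𝕜 E] {s : Set E} {f : E → β}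
    (hf : ConvexOn 𝕜 s f) {a b c d : E} (ha : a ∈ s) (hd : d ∈ s) (hb : b ∈ [a -[𝕜] d])
    (hsum : b + c = a + d) : f b + f c ≤ f a + f d := by
  obtain ⟨p, q, hp, hq, hpq, rfl⟩ := hb
  have hc : c = q • a + p • d := by
    rw [← add_right_inj (p • a + q • d), hsum]
    calc a + d = (p + q) • a + (p + q) • d := by simp only [hpq, one_smul]
      _ = p • a + q • d + (q • a + p • d) := by module
  calc f (p • a + q • d) + f c
      ≤ (p • f a + q • f d) + (q • f a + p • f d) := by
        rw [hc]
        exact add_le_add (hf.2 ha hd hp hq hpq) (hf.2 ha hd hq hp (add_comm q p ▸ hpq))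
    _ = (p + q) • f a + (p + q) • f d := by module
    _ = f a + f d := by simp only [hpq, one_smul]

theorem convexOn_univ_add_cross_le [IsStrictOrderedRing 𝕜] {f : 𝕜 → β} (hf : ConvexOn 𝕜 univ f)
    {x x' y y' : 𝕜} (hx : x ≤ x') (hy : y ≤ y') :
    f (x + y') + f (x' + y) ≤ f (x + y) + f (x' + y') :=
  convexOn_add_le_add_of_mem_segment hf (mem_univ _) (mem_univ _)
    (Icc_subset_segment ⟨add_le_add_right hy x, add_le_add_left hx y'⟩) (by ring)

end Convex

section Convolution

variable {Ω Ω' M F : Type*} [MeasurableSpace Ω] [MeasurableSpace Ω'] [AddMonoid M]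
  [MeasurableSpace M] [MeasurableAdd₂ M] [NormedAddCommGroup F] {P : Measure Ω} {Q : Measure Ω'}
  [SFinite P] [SFinite Q] {X : Ω → M} {Y : Ω' → M} {f : M → F}

theorem map_conv_map (hX : Measurable X) (hY : Measurable Y) :
    P.map X ∗ Q.map Y = (P.prod Q).map fun p ↦ X p.1 + Y p.2 := by
  rw [Measure.conv, Measure.map_prod_map P Q hX hY, Measure.map_map (by fun_prop) (by fun_prop)]
  rfl

theorem integrable_map_conv_map_iff (hX : Measurable X) (hY : Measurable Y)
    (hf : AEStronglyMeasurable f (P.map X ∗ Q.map Y)) :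
    Integrable f (P.map X ∗ Q.map Y) ↔
      Integrable (fun p ↦ f (X p.1 + Y p.2)) (P.prod Q) := by
  rw [map_conv_map hX hY] at hf ⊢
  exact integrable_map_measure hf (by fun_prop)

theorem integral_map_conv_map [NormedSpace ℝ F] (hX : Measurable X) (hY : Measurable Y)
    (hf : AEStronglyMeasurable f (P.map X ∗ Q.map Y)) :
    ∫ z, f z ∂(P.map X ∗ Q.map Y) = ∫ p, f (X p.1 + Y p.2) ∂(P.prod Q) := by
  rw [map_conv_map hX hY] at hf ⊢
  exact integral_map (by fun_prop) hf

end Convolution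

section Coupling

variable {Ω : Type*} [MeasurableSpace Ω] {P : Measure Ω} [SFinite P] {X Y : Ω → ℝ}

theorem two_mul_integral_conv_map_le (hX : Measurable X) (hY : Measurable Y) (hXY : X ≤ᵐ[P] Y)
    {φ : ℝ → ℝ} (hφ : ConvexOn ℝ univ φ) (hφXY : Integrable φ (P.map X ∗ P.map Y))
    (hφXX : Integrable φ (P.map X ∗ P.map X))
    (hφYY : Integrable φ (P.map Y ∗ P.map Y)) :
    2 * ∫ z, φ z ∂(P.map X ∗ P.map Y) ≤
      ∫ z, φ z ∂(P.map X ∗ P.map X) + ∫ z, φ z ∂(P.map Y ∗ P.map Y) := by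
  have hφm {ρ : Measure ℝ} : AEStronglyMeasurable φ ρ :=
    (continuousOn_univ.1 (hφ.continuousOn isOpen_univ)).aestronglyMeasurable
  have hφYX : Integrable φ (P.map Y ∗ P.map X) := by rwa [Measure.conv_comm]
  have h_cross : ∀ᵐ p ∂P.prod P,
      φ (X p.1 + Y p.2) + φ (Y p.1 + X p.2) ≤ φ (X p.1 + X p.2) + φ (Y p.1 + Y p.2) := by
    filter_upwards [Measure.quasiMeasurePreserving_fst.ae hXY,
      Measure.quasiMeasurePreserving_snd.ae hXY] with p h₁ h₂
    exact convexOn_univ_add_cross_le hφ h₁ h₂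
  calc 2 * ∫ z, φ z ∂(P.map X ∗ P.map Y)
      = ∫ z, φ z ∂(P.map X ∗ P.map Y) + ∫ z, φ z ∂(P.map Y ∗ P.map X) := by
        rw [Measure.conv_comm (P.map Y), two_mul]
    _ ≤ ∫ z, φ z ∂(P.map X ∗ P.map X) + ∫ z, φ z ∂(P.map Y ∗ P.map Y) := by
        simp only [integrable_map_conv_map_iff, hX, hY, hφm] at hφXY hφYX hφXX hφYY
        simp only [integral_map_conv_map, hX, hY, hφm]
        rw [← integral_add hφXY hφYX, ← integral_add hφXX hφYY]
        exact integral_mono_ae (hφXY.add hφYX) (hφXX.add hφYY) h_cross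

theorem convexOrder_conv_map_of_ae_le (hX : Measurable X) (hY : Measurable Y) (hXY : X ≤ᵐ[P] Y) :
    ConvexOrder (P.map X ∗ P.map Y)
      ((2 : ENNReal)⁻¹ • (P.map X ∗ P.map X + P.map Y ∗ P.map Y)) := by
  intro φ hφ hφXY hφ_mix
  rw [integrable_smul_measure (by simp) (by simp), integrable_add_measure] at hφ_mix
  obtain ⟨hφXX, hφYY⟩ := hφ_mix
  rw [integral_smul_measure, integral_add_measure hφXX hφYY, ENNReal.toReal_inv,
    ENNReal.toReal_ofNat, smul_eq_mul]
  linarith [two_mul_integral_conv_map_le hX hY hXY hφ hφXY hφXX hφYY]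

end Coupling

section DistFun

variable (μ : Measure ℝ) [IsFiniteMeasure μ]

theorem monotone_distFun : Monotone (distFun μ) :=
  fun _ _ hxy ↦ measureReal_mono (Iic_subset_Iic.2 hxy)

theorem distFun_le_real_univ (x : ℝ) : distFun μ x ≤ μ.real univ :=
  measureReal_mono (subset_univ _)

theorem tendsto_distFun_atTop : Tendsto (distFun μ) atTop (𝓝 (μ.real univ)) :=
  (ENNReal.tendsto_toReal (measure_ne_top μ univ)).comp (tendsto_measure_Iic_atTop μ)

theorem tendsto_distFun_atBot : Tendsto (distFun μ) atBot (𝓝 0) := by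
  have h : Tendsto (μ ∘ Iic) atBot (𝓝 (μ (⋂ x, Iic x))) :=
    tendsto_measure_iInter_atBot (fun _ ↦ nullMeasurableSet_Iic) monotone_Iic
      ⟨0, measure_ne_top μ _⟩
  rw [iInter_Iic_eq_empty_iff.2 (by simp [not_bddBelow_univ]), measure_empty] at h
  exact (ENNReal.tendsto_toReal ENNReal.zero_ne_top).comp h

theorem tendsto_distFun_nhdsGT (x : ℝ) : Tendsto (distFun μ) (𝓝[>] x) (𝓝 (distFun μ x)) := by
  have h : Tendsto (μ ∘ Iic) (𝓝[>] x) (𝓝 (μ (⋂ y > x, Iic y))) :=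
    tendsto_measure_biInter_gt (fun _ _ ↦ nullMeasurableSet_Iic)
      (fun _ _ _ hij ↦ Iic_subset_Iic.2 hij) ⟨x + 1, lt_add_one x, measure_ne_top μ _⟩
  have h_iInter : ⋂ y > x, Iic y = Iic x := by
    ext z
    simpa only [mem_iInter, mem_Iic] using forall_gt_imp_ge_iff_le_of_dense
  rw [h_iInter] at h
  exact (ENNReal.tendsto_toReal (measure_ne_top μ _)).comp h

end DistFun

/-- The quantile function of a finite measure `μ` on `ℝ`, i.e. the generalised inverse of its
distribution function; it is used to couple stochastically ordered measures. It is meaningful for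
`u ∈ (0, μ(ℝ))` only: outside this interval the infimum may be over a set that is empty or unbounded
below, and then has the junk value `0`. -/
noncomputable def quantile (μ : Measure ℝ) (u : ℝ) : ℝ := sInf {x | u ≤ distFun μ x}

section Quantile

variable {μ ν : Measure ℝ} [IsFiniteMeasure μ] [IsFiniteMeasure ν]

theorem quantile_le_iff {u x : ℝ} (hu : u ∈ Ioo 0 (μ.real univ)) :
    quantile μ u ≤ x ↔ u ≤ distFun μ x := by
  have h_nonempty : {y | u ≤ distFun μ y}.Nonempty :=
    ((tendsto_distFun_atTop μ).eventually_const_le hu.2).exists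
  have h_bddBelow : BddBelow {y | u ≤ distFun μ y} := by
    obtain ⟨z, hz⟩ := ((tendsto_distFun_atBot μ).eventually_lt_const hu.1).exists
    exact ⟨z, fun y hy ↦ ((monotone_distFun μ).reflect_lt (hz.trans_le hy)).le⟩
  refine ⟨fun hx ↦ ge_of_tendsto (tendsto_distFun_nhdsGT μ x) ?_, csInf_le h_bddBelow⟩
  filter_upwards [self_mem_nhdsWithin] with y hxy
  obtain ⟨z, hz, hzy⟩ := (csInf_lt_iff h_bddBelow h_nonempty).1 (hx.trans_lt hxy)
  exact hz.trans (monotone_distFun μ hzy.le)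

theorem le_distFun_quantile {u : ℝ} (hu : u ∈ Ioo 0 (μ.real univ)) :
    u ≤ distFun μ (quantile μ u) :=
  (quantile_le_iff hu).1 le_rfl

variable (μ) in
theorem monotoneOn_quantile : MonotoneOn (quantile μ) (Ioo 0 (μ.real univ)) :=
  fun _ hu _ hv huv ↦ (quantile_le_iff hu).2 (huv.trans (le_distFun_quantile hv))

variable (μ) in
theorem aemeasurable_quantile :
    AEMeasurable (quantile μ) (volume.restrict (Ioo 0 (μ.real univ))) :=
  aemeasurable_restrict_of_monotoneOn measurableSet_Ioo (monotoneOn_quantile μ)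

variable (μ) in
theorem map_quantile_volume : (volume.restrict (Ioo 0 (μ.real univ))).map (quantile μ) = μ := by
  refine Measure.ext_of_Iic _ _ fun x ↦ ?_
  have h_preimage : quantile μ ⁻¹' Iic x ∩ Ioo 0 (μ.real univ) =
      Iic (distFun μ x) ∩ Ioo 0 (μ.real univ) :=
    ext fun u ↦ and_congr_left quantile_le_iff
  have h_inter : Iic (distFun μ x) ∩ Ioc 0 (μ.real univ) = Ioc 0 (distFun μ x) := by
    rw [inter_comm, Ioc_inter_Iic, min_eq_right (distFun_le_real_univ μ x)]
  calc (volume.restrict (Ioo 0 (μ.real univ))).map (quantile μ) (Iic x)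
      = volume (Iic (distFun μ x) ∩ Ioo 0 (μ.real univ)) := by
        rw [Measure.map_apply_of_aemeasurable (aemeasurable_quantile μ) measurableSet_Iic,
          Measure.restrict_apply' measurableSet_Ioo, h_preimage]
    _ = volume (Ioc 0 (distFun μ x)) := by
        rw [← h_inter]
        exact measure_congr (ae_eq_set_inter .rfl Ioo_ae_eq_Ioc)
    _ = μ (Iic x) := by
        rw [Real.volume_Ioc, sub_zero, distFun, ENNReal.ofReal_toReal (measure_ne_top μ _)]

theorem StochOrder.quantile_le_quantile (h : StochOrder μ ν) {u : ℝ}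
    (hμ : u ∈ Ioo 0 (μ.real univ)) (hν : u ∈ Ioo 0 (ν.real univ)) :
    quantile μ u ≤ quantile ν u :=
  (quantile_le_iff hμ).2 ((le_distFun_quantile hν).trans (h.2 _))

theorem StochOrder.exists_coupling (h : StochOrder μ ν) :
    ∃ π : Measure (ℝ × ℝ), IsFiniteMeasure π ∧ π.fst = μ ∧ π.snd = ν ∧ ∀ᵐ p ∂π, p.1 ≤ p.2 := by
  have h_mass : μ.real univ = ν.real univ := congrArg ENNReal.toReal h.1
  have hμ := aemeasurable_quantile μ
  have hν := h_mass ▸ aemeasurable_quantile ν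
  refine ⟨(volume.restrict (Ioo 0 (μ.real univ))).map fun u ↦ (quantile μ u, quantile ν u),
    inferInstance, ?_, ?_, ?_⟩
  · rw [Measure.fst_map_prodMk₀ hν, map_quantile_volume]
  · rw [Measure.snd_map_prodMk₀ hμ, h_mass, map_quantile_volume]
  · rw [ae_map_iff (hμ.prodMk hν) (measurableSet_le measurable_fst measurable_snd)]
    filter_upwards [ae_restrict_mem measurableSet_Ioo] with u hu
    exact h.quantile_le_quantile hu (h_mass ▸ hu)

theorem StochOrder.convexOrder_conv (h : StochOrder μ ν) :
    ConvexOrder (μ ∗ ν) ((2 : ENNReal)⁻¹ • (μ ∗ μ + ν ∗ ν)) := by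
  obtain ⟨π, _, rfl, rfl, hπ⟩ := h.exists_coupling
  exact convexOrder_conv_map_of_ae_le measurable_fst measurable_snd hπ

end Quantile

theorem stmt1_general (μ ν : Measure ℝ) [IsFiniteMeasure μ] [IsFiniteMeasure ν]
    (hst : StochOrder μ ν ∨ StochOrder ν μ) :
    ConvexOrder (Measure.conv μ ν)
      ((2 : ENNReal)⁻¹ • (Measure.conv μ μ + Measure.conv ν ν)) := by
  rcases hst with h | h
  · exact h.convexOrder_conv
  · rw [Measure.conv_comm μ ν, add_comm]
    exact h.convexOrder_conv

/-- If μ and ν are probability distributions on ℝ with finite first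
moments that are comparable in the usual stochastic order, then
μ∗ν ≼ₓ ½(μ∗μ + ν∗ν). -/
theorem stmt1 (μ ν : Measure ℝ) [IsProbabilityMeasure μ] [IsProbabilityMeasure ν]
    (hμ : Integrable (fun x : ℝ => |x|) μ) (hν : Integrable (fun x : ℝ => |x|) ν)
    (hst : StochOrder μ ν ∨ StochOrder ν μ) :
    ConvexOrder (Measure.conv μ ν)
      ((2 : ENNReal)⁻¹ • (Measure.conv μ μ + Measure.conv ν ν)) := by
  exact stmt1_general μ ν hst
end

section
/- Let μ and ν be two finite Borel measures on ℝ with finite first and second moments, and set m̄ = ∫x dμ and n̄ = ∫x dν. Assume μ*ν ≼_cx (1/2)(μ*μ + ν*ν) and let φ: ℝ → ℝ be a twice differentiable convex function such that ∫φ d(μ*μ + ν*ν) and ∫φ d(2μ*ν) are both finite. Then (inf_x φ''(x))·(m̄ − n̄)² ≤ ∫φ d(μ*μ) + ∫φ d(ν*ν) − 2∫φ d(μ*ν) ≤ (sup_x φ''(x))·(m̄ − n̄)², with the conventions ∞·0 = ∞ and (−∞)·0 = −∞. -/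
open MeasureTheory Set

/-! The gap `∫ φ d(μ ∗ μ) + ∫ φ d(ν ∗ ν) - 2 ∫ φ d(μ ∗ ν)` is the integral of `φ` against
`(μ - ν) ∗ (μ - ν)`; it is linear in `φ`, and the convex order hypothesis makes it nonnegative on
convex functions. Testing with the constant `-1` shows that `μ` and `ν` have the same mass, so the
gap of `‖x‖²` reduces to the cross term `2 ‖m̄ - n̄‖²`. If `φ'' ≥ c` then `φ - (c / 2) ‖x‖²` is
convex, and nonnegativity of its gap is the lower bound. The upper bound is the lower bound for
`-φ`. -/

section StrongConvexity

variable {D : Set ℝ} {f f' f'' : ℝ → ℝ} {m : ℝ}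

theorem strongConvexOn_of_hasDerivWithinAt2_ge (hD : Convex ℝ D)
    (hf' : ∀ x ∈ D, HasDerivWithinAt f (f' x) D x)
    (hf'' : ∀ x ∈ D, HasDerivWithinAt f' (f'' x) D x)
    (hm : ∀ x ∈ D, m ≤ f'' x) : StrongConvexOn D m f := by
  have hg' : ∀ x ∈ D, HasDerivWithinAt (fun x ↦ f x - m / 2 * ‖x‖ ^ 2) (f' x - m * x) D x := by
    intro x hx
    have hsq : HasDerivAt (fun x : ℝ ↦ m / 2 * ‖x‖ ^ 2) (m * x) x := by
      simp only [Real.norm_eq_abs, sq_abs]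
      exact ((hasDerivAt_pow 2 x).const_mul (m / 2)).congr_deriv (by norm_num; ring)
    exact (hf' x hx).sub hsq.hasDerivWithinAt
  have hg'' : ∀ x ∈ D, HasDerivWithinAt (fun x ↦ f' x - m * x) (f'' x - m) D x := by
    intro x hx
    have hlin : HasDerivAt (fun x : ℝ ↦ m * x) m x := by
      simpa only [mul_one] using (hasDerivAt_id' x).const_mul m
    exact (hf'' x hx).sub hlin.hasDerivWithinAt
  exact strongConvexOn_iff_convex.2 <| convexOn_of_hasDerivWithinAt2_nonneg hD
    (fun x hx ↦ (hg' x hx).continuousWithinAt)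
    (fun x hx ↦ (hg' x (interior_subset hx)).mono interior_subset)
    (fun x hx ↦ (hg'' x (interior_subset hx)).mono interior_subset)
    (fun x hx ↦ sub_nonneg.2 (hm x (interior_subset hx)))

theorem strongConcaveOn_of_hasDerivWithinAt2_le (hD : Convex ℝ D)
    (hf' : ∀ x ∈ D, HasDerivWithinAt f (f' x) D x)
    (hf'' : ∀ x ∈ D, HasDerivWithinAt f' (f'' x) D x)
    (hm : ∀ x ∈ D, f'' x ≤ m) : StrongConcaveOn D (-m) f := by
  have hneg : StrongConvexOn D (-m) (-f) :=
    strongConvexOn_of_hasDerivWithinAt2_ge hD (fun x hx ↦ (hf' x hx).neg)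
      (fun x hx ↦ (hf'' x hx).neg) (fun x hx ↦ neg_le_neg (hm x hx))
  simpa only [neg_neg] using! UniformConvexOn.neg hneg

end StrongConvexity

section ConvolutionMoments

theorem measureReal_conv_univ {M : Type*} [AddMonoid M] [MeasurableSpace M] [MeasurableAdd₂ M]
    (μ ν : Measure M) [SFinite ν] : (μ ∗ ν).real univ = μ.real univ * ν.real univ := by
  rw [Measure.conv, map_measureReal_apply (by fun_prop) MeasurableSet.univ, preimage_univ,
    ← univ_prod_univ, measureReal_prod_prod]

theorem memLp_id_conv {E : Type*} [NormedAddCommGroup E] [MeasurableSpace E] [BorelSpace E]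
    [SecondCountableTopology E] {p : ENNReal} {μ ν : Measure E} [IsFiniteMeasure μ]
    [IsFiniteMeasure ν] (hμ : MemLp id p μ) (hν : MemLp id p ν) : MemLp id p (μ ∗ ν) :=
  (memLp_map_measure_iff aestronglyMeasurable_id (by fun_prop)).2
    ((hμ.comp_fst ν).add (hν.comp_snd μ))

theorem integral_norm_sq_conv {E : Type*} [NormedAddCommGroup E] [InnerProductSpace ℝ E]
    [CompleteSpace E] [MeasurableSpace E] [BorelSpace E] [SecondCountableTopology E]
    {μ ν : Measure E} [IsFiniteMeasure μ] [IsFiniteMeasure ν]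
    (hμ : MemLp id 2 μ) (hν : MemLp id 2 ν) :
    ∫ x, ‖x‖ ^ 2 ∂(μ ∗ ν) = ν.real univ * (∫ x, ‖x‖ ^ 2 ∂μ) +
      2 * inner ℝ (∫ x, x ∂μ) (∫ x, x ∂ν) + μ.real univ * (∫ x, ‖x‖ ^ 2 ∂ν) := by
  have hμ1 : Integrable (fun x ↦ x) μ := hμ.integrable one_le_two
  have hν1 : Integrable (fun x ↦ x) ν := hν.integrable one_le_two
  have hfst : Integrable (fun z : E × E ↦ ‖z.1‖ ^ 2) (μ.prod ν) :=
    (hμ.integrable_norm_pow two_ne_zero).comp_fst ν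
  have hsnd : Integrable (fun z : E × E ↦ ‖z.2‖ ^ 2) (μ.prod ν) :=
    (hν.integrable_norm_pow two_ne_zero).comp_snd μ
  have hinner : Integrable (fun z : E × E ↦ inner ℝ z.1 z.2) (μ.prod ν) :=
    hμ1.op_fst_snd (by fun_prop) ⟨1, fun x y ↦ by simpa using norm_inner_le_norm (𝕜 := ℝ) x y⟩ hν1
  have hfst_inner : Integrable (fun z : E × E ↦ ‖z.1‖ ^ 2 + 2 * inner ℝ z.1 z.2) (μ.prod ν) :=
    hfst.add (hinner.const_mul 2)
  have hcross : ∫ z, inner ℝ z.1 z.2 ∂(μ.prod ν) = inner ℝ (∫ x, x ∂μ) (∫ x, x ∂ν) :=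
    integral_prod_bilin (innerSL ℝ) hμ1 hν1
  calc ∫ x, ‖x‖ ^ 2 ∂(μ ∗ ν)
      = ∫ z, ‖z.1 + z.2‖ ^ 2 ∂(μ.prod ν) :=
        integral_map (by fun_prop) (by fun_prop)
    _ = ∫ z, (‖z.1‖ ^ 2 + 2 * inner ℝ z.1 z.2 + ‖z.2‖ ^ 2) ∂(μ.prod ν) := by
        simp only [norm_add_sq_real]
    _ = (∫ z, ‖z.1‖ ^ 2 ∂(μ.prod ν)) + 2 * (∫ z, inner ℝ z.1 z.2 ∂(μ.prod ν)) +
          ∫ z, ‖z.2‖ ^ 2 ∂(μ.prod ν) := by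
        rw [integral_add hfst_inner hsnd, integral_add hfst (hinner.const_mul 2),
          integral_const_mul]
    _ = _ := by
        rw [integral_fun_fst (fun x : E ↦ ‖x‖ ^ 2), integral_fun_snd (fun x : E ↦ ‖x‖ ^ 2), hcross,
          smul_eq_mul, smul_eq_mul]

end ConvolutionMoments

section ConvGap

/-- The gap in the Jensen-type inequality `2 ∫ φ d(μ ∗ ν) ≤ ∫ φ d(μ ∗ μ) + ∫ φ d(ν ∗ ν)`. Bochner
integrals are used, so the value is meaningful only for `φ` integrable against all three
convolutions. -/
noncomputable def convGap {M : Type*} [AddMonoid M] [MeasurableSpace M] (μ ν : Measure M)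
    (φ : M → ℝ) : ℝ :=
  (∫ x, φ x ∂(μ ∗ μ)) + (∫ x, φ x ∂(ν ∗ ν)) - 2 * ∫ x, φ x ∂(μ ∗ ν)

section AddMonoid

variable {M : Type*} [AddMonoid M] [MeasurableSpace M] {μ ν : Measure M} {φ ψ : M → ℝ}

theorem convGap_neg : convGap μ ν (-φ) = -convGap μ ν φ := by
  simp only [convGap, Pi.neg_apply, integral_neg]
  ring

theorem convGap_const_mul (a : ℝ) : convGap μ ν (fun x ↦ a * φ x) = a * convGap μ ν φ := by
  simp only [convGap, integral_const_mul]
  ring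

theorem convGap_sub (hφμ : Integrable φ (μ ∗ μ)) (hφν : Integrable φ (ν ∗ ν))
    (hφ : Integrable φ (μ ∗ ν)) (hψμ : Integrable ψ (μ ∗ μ)) (hψν : Integrable ψ (ν ∗ ν))
    (hψ : Integrable ψ (μ ∗ ν)) :
    convGap μ ν (fun x ↦ φ x - ψ x) = convGap μ ν φ - convGap μ ν ψ := by
  simp only [convGap, integral_sub hφμ hψμ, integral_sub hφν hψν, integral_sub hφ hψ]
  ring

theorem convGap_const [MeasurableAdd₂ M] [SFinite μ] [SFinite ν] (a : ℝ) :
    convGap μ ν (fun _ ↦ a) = a * (μ.real univ - ν.real univ) ^ 2 := by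
  simp only [convGap, integral_const, measureReal_conv_univ, smul_eq_mul]
  ring

end AddMonoid

theorem convGap_norm_sq {E : Type*} [NormedAddCommGroup E] [InnerProductSpace ℝ E]
    [CompleteSpace E] [MeasurableSpace E] [BorelSpace E] [SecondCountableTopology E]
    {μ ν : Measure E} [IsFiniteMeasure μ] [IsFiniteMeasure ν]
    (hμ : MemLp id 2 μ) (hν : MemLp id 2 ν) (hmass : μ.real univ = ν.real univ) :
    convGap μ ν (fun x ↦ ‖x‖ ^ 2) = 2 * ‖(∫ x, x ∂μ) - ∫ x, x ∂ν‖ ^ 2 := by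
  simp only [convGap, integral_norm_sq_conv hμ hμ, integral_norm_sq_conv hν hν,
    integral_norm_sq_conv hμ hν, hmass, norm_sub_sq_real, real_inner_self_eq_norm_sq]
  ring

end ConvGap

section ConvexLE

/-- The convex order between measures on a real vector space; `ConvexOrder` is the case of `ℝ`. -/
def ConvexLE {E : Type*} [AddCommMonoid E] [Module ℝ E] [MeasurableSpace E] (μ ν : Measure E) :
    Prop :=
  ∀ φ : E → ℝ, ConvexOn ℝ univ φ → Integrable φ μ → Integrable φ ν → ∫ x, φ x ∂μ ≤ ∫ x, φ x ∂ν

section VectorSpace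

variable {E : Type*} [AddCommMonoid E] [Module ℝ E] [MeasurableSpace E] {μ ν : Measure E}

theorem ConvexLE.convGap_nonneg (h : ConvexLE (μ ∗ ν) ((2 : ENNReal)⁻¹ • (μ ∗ μ + ν ∗ ν)))
    {φ : E → ℝ} (hφ : ConvexOn ℝ univ φ) (hμμ : Integrable φ (μ ∗ μ))
    (hνν : Integrable φ (ν ∗ ν)) (hμν : Integrable φ (μ ∗ ν)) : 0 ≤ convGap μ ν φ := by
  have hle := h φ hφ hμν ((hμμ.add_measure hνν).smul_measure (by simp))
  rw [integral_smul_measure, integral_add_measure hμμ hνν, ENNReal.toReal_inv,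
    ENNReal.toReal_ofNat, smul_eq_mul] at hle
  rw [convGap]
  linarith

theorem ConvexLE.measureReal_univ_eq [MeasurableAdd₂ E] [IsFiniteMeasure μ] [IsFiniteMeasure ν]
    (h : ConvexLE (μ ∗ ν) ((2 : ENNReal)⁻¹ • (μ ∗ μ + ν ∗ ν))) : μ.real univ = ν.real univ := by
  have hgap : 0 ≤ convGap μ ν fun _ ↦ -1 :=
    h.convGap_nonneg (convexOn_const _ convex_univ) (integrable_const _) (integrable_const _)
      (integrable_const _)
  rw [convGap_const] at hgap
  have hsq : (μ.real univ - ν.real univ) ^ 2 = 0 := le_antisymm (by linarith) (sq_nonneg _)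
  exact sub_eq_zero.1 (pow_eq_zero_iff two_ne_zero |>.1 hsq)

end VectorSpace

section InnerProductSpace

variable {E : Type*} [NormedAddCommGroup E] [InnerProductSpace ℝ E] [CompleteSpace E]
  [MeasurableSpace E] [BorelSpace E] [SecondCountableTopology E]
  {μ ν : Measure E} [IsFiniteMeasure μ] [IsFiniteMeasure ν] {φ : E → ℝ}

theorem ConvexLE.mul_norm_sq_le_convGap
    (h : ConvexLE (μ ∗ ν) ((2 : ENNReal)⁻¹ • (μ ∗ μ + ν ∗ ν)))
    (hμ : MemLp id 2 μ) (hν : MemLp id 2 ν) (hμμ : Integrable φ (μ ∗ μ))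
    (hνν : Integrable φ (ν ∗ ν)) (hμν : Integrable φ (μ ∗ ν)) {c : ℝ}
    (hφ : StrongConvexOn univ c φ) :
    c * ‖(∫ x, x ∂μ) - ∫ x, x ∂ν‖ ^ 2 ≤ convGap μ ν φ := by
  have hsq {ρ : Measure E} (hρ : MemLp id 2 ρ) : Integrable (fun x ↦ c / 2 * ‖x‖ ^ 2) ρ :=
    (hρ.integrable_norm_pow two_ne_zero).const_mul _
  have hsqμμ := hsq (memLp_id_conv hμ hμ)
  have hsqνν := hsq (memLp_id_conv hν hν)
  have hsqμν := hsq (memLp_id_conv hμ hν)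
  have hgap : 0 ≤ convGap μ ν fun x ↦ φ x - c / 2 * ‖x‖ ^ 2 :=
    h.convGap_nonneg (strongConvexOn_iff_convex.1 hφ)
      (hμμ.sub hsqμμ) (hνν.sub hsqνν) (hμν.sub hsqμν)
  rw [convGap_sub hμμ hνν hμν hsqμμ hsqνν hsqμν, convGap_const_mul,
    convGap_norm_sq hμ hν h.measureReal_univ_eq] at hgap
  linarith

theorem stmt4_general (h : ConvexLE (μ ∗ ν) ((2 : ENNReal)⁻¹ • (μ ∗ μ + ν ∗ ν)))
    (hμ : MemLp id 2 μ) (hν : MemLp id 2 ν) (hμμ : Integrable φ (μ ∗ μ))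
    (hνν : Integrable φ (ν ∗ ν)) (hμν : Integrable φ (μ ∗ ν)) :
    (∀ c : ℝ, StrongConvexOn univ c φ →
        c * ‖(∫ x, x ∂μ) - ∫ x, x ∂ν‖ ^ 2 ≤ convGap μ ν φ) ∧
      (∀ C : ℝ, StrongConcaveOn univ (-C) φ →
        convGap μ ν φ ≤ C * ‖(∫ x, x ∂μ) - ∫ x, x ∂ν‖ ^ 2) := by
  refine ⟨fun c hc ↦ h.mul_norm_sq_le_convGap hμ hν hμμ hνν hμν hc, fun C hC ↦ ?_⟩
  have hneg := h.mul_norm_sq_le_convGap hμ hν hμμ.neg hνν.neg hμν.neg (UniformConcaveOn.neg hC)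
  rw [convGap_neg] at hneg
  linarith

end InnerProductSpace

end ConvexLE

/-- Proposition: bounds for the Jensen-type gap in terms of bounds
on φ''.  The statement "inf φ'' · (m̄−n̄)² ≤ gap ≤ sup φ'' · (m̄−n̄)²" (with the
conventions ∞·0 = ∞ and (−∞)·0 = −∞) is expressed by quantifying over all real
lower/upper bounds of φ''. -/
theorem stmt4 (μ ν : Measure ℝ) [IsFiniteMeasure μ] [IsFiniteMeasure ν]
    (hμ1 : Integrable (fun x : ℝ => |x|) μ) (hν1 : Integrable (fun x : ℝ => |x|) ν)
    (hμ2 : Integrable (fun x : ℝ => x ^ 2) μ) (hν2 : Integrable (fun x : ℝ => x ^ 2) ν)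
    (hcx : ConvexOrder (Measure.conv μ ν)
      ((2 : ENNReal)⁻¹ • (Measure.conv μ μ + Measure.conv ν ν)))
    (φ φ' φ'' : ℝ → ℝ)
    (hd1 : ∀ x, HasDerivAt φ (φ' x) x) (hd2 : ∀ x, HasDerivAt φ' (φ'' x) x)
    (hφ : ConvexOn ℝ Set.univ φ)
    (hi1 : Integrable φ (Measure.conv μ μ)) (hi2 : Integrable φ (Measure.conv ν ν))
    (hi3 : Integrable φ (Measure.conv μ ν)) :
    (∀ c : ℝ, (∀ x, c ≤ φ'' x) →
        c * ((∫ x, x ∂μ) - ∫ x, x ∂ν) ^ 2 ≤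
          (∫ x, φ x ∂(Measure.conv μ μ)) + (∫ x, φ x ∂(Measure.conv ν ν)) -
            2 * ∫ x, φ x ∂(Measure.conv μ ν)) ∧
      (∀ C : ℝ, (∀ x, φ'' x ≤ C) →
        (∫ x, φ x ∂(Measure.conv μ μ)) + (∫ x, φ x ∂(Measure.conv ν ν)) -
            2 * ∫ x, φ x ∂(Measure.conv μ ν) ≤
          C * ((∫ x, x ∂μ) - ∫ x, x ∂ν) ^ 2) := by
  have h := stmt4_general hcx ((memLp_two_iff_integrable_sq aestronglyMeasurable_id).2 hμ2)
    ((memLp_two_iff_integrable_sq aestronglyMeasurable_id).2 hν2) hi1 hi2 hi3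
  simp only [Real.norm_eq_abs, sq_abs] at h
  have hφ' : ∀ x ∈ univ, HasDerivWithinAt φ (φ' x) univ x := fun x _ ↦ (hd1 x).hasDerivWithinAt
  have hφ'' : ∀ x ∈ univ, HasDerivWithinAt φ' (φ'' x) univ x := fun x _ ↦ (hd2 x).hasDerivWithinAt
  exact ⟨fun c hc ↦ h.1 c
      (strongConvexOn_of_hasDerivWithinAt2_ge convex_univ hφ' hφ'' fun x _ ↦ hc x),
    fun C hC ↦ h.2 C
      (strongConcaveOn_of_hasDerivWithinAt2_le convex_univ hφ' hφ'' fun x _ ↦ hC x)⟩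
end

section
/- Let μ₁,…,μ_m be finite Borel measures on ℝ with finite first moments, and set a_i = μ_i(ℝ) and b_i = ∫x dμ_i for i = 1,…,m. Let P and Q be real polynomials in m variables with non-negative coefficients such that P(μ₁,…,μ_m) ≼_cx Q(μ₁,…,μ_m), where the product of variables is interpreted as convolution of measures. Then P(a₁,…,a_m) = Q(a₁,…,a_m) and the directional derivatives of P and Q along the vector (b₁,…,b_m) at the point (a₁,…,a_m) coincide: ∂P/∂(b₁,…,b_m)(a₁,…,a_m) = ∂Q/∂(b₁,…,b_m)(a₁,…,a_m). -/
open MeasureTheory Set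

/-!
Mass and mean multiply under convolution like dual numbers:
`(a + b ε) (a' + b' ε) = a a' + (a b' + a' b) ε`. Hence `P(μ₁, …, μ_m)` has mass and mean
`P(a₁ + b₁ ε, …, a_m + b_m ε)`, which by Taylor's formula is `P(a) + ∂P/∂b(a) ε`. Measures in convex
order have the same mass and mean, because `±1` and `±x` are all convex.
-/

section TrivSqZeroExt

variable {R M σ : Type*} [CommSemiring R] [AddCommMonoid M] [Module R M] [Module Rᵐᵒᵖ M]
  [IsCentralScalar R M]

lemma fst_mvPolynomial_aeval (f : σ → TrivSqZeroExt R M) (P : MvPolynomial σ R) :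
    (MvPolynomial.aeval f P).fst = MvPolynomial.eval (fun i => (f i).fst) P :=
  MvPolynomial.comp_aeval_apply f (TrivSqZeroExt.fstHom R R M) P

lemma snd_mvPolynomial_aeval [Fintype σ] (f : σ → TrivSqZeroExt R M) (P : MvPolynomial σ R) :
    (MvPolynomial.aeval f P).snd =
      ∑ i, MvPolynomial.eval (fun j => (f j).fst) (MvPolynomial.pderiv i P) • (f i).snd := by
  classical
  induction P using MvPolynomial.induction_on with
  | C r => simp [TrivSqZeroExt.algebraMap_eq_inl]
  | add p q hp hq => simp [hp, hq, add_smul, Finset.sum_add_distrib]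
  | mul_X p n hp =>
    have eval_pderiv_mul_X (i : σ) :
        MvPolynomial.eval (fun j => (f j).fst) (MvPolynomial.pderiv i (p * MvPolynomial.X n)) =
          (if i = n then MvPolynomial.eval (fun j => (f j).fst) p else 0) +
            (f n).fst * MvPolynomial.eval (fun j => (f j).fst) (MvPolynomial.pderiv i p) := by
      simp [MvPolynomial.pderiv_X, Pi.single_apply, apply_ite, eq_comm]
    simp [eval_pderiv_mul_X, hp, fst_mvPolynomial_aeval, ite_smul, add_smul, mul_smul,
      Finset.sum_add_distrib, Finset.smul_sum, -Derivation.leibniz]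

end TrivSqZeroExt

/-- Finite measures with finite first moment, the class on which mass and mean are meaningful.
Integrability of the identity stands for that of the norm. -/
structure HasFiniteFirstMoment {E : Type*} [NormedAddCommGroup E] [MeasurableSpace E]
    (μ : Measure E) : Prop where
  isFiniteMeasure : IsFiniteMeasure μ
  integrable_id : Integrable (fun x : E => x) μ

section Convolution

lemma measureReal_univ_conv {M : Type*} [AddMonoid M] [MeasurableSpace M] [MeasurableAdd₂ M]
    (μ ν : Measure M) [SFinite ν] :
    (μ.conv ν).real univ = μ.real univ * ν.real univ := by
  rw [Measure.conv, map_measureReal_apply measurable_add .univ, preimage_univ,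
    ← univ_prod_univ, measureReal_prod_prod]

variable {E : Type*} [NormedAddCommGroup E] [MeasurableSpace E] [BorelSpace E]
  [SecondCountableTopology E] {μ ν : Measure E}

lemma HasFiniteFirstMoment.conv (hμ : HasFiniteFirstMoment μ) (hν : HasFiniteFirstMoment ν) :
    HasFiniteFirstMoment (μ.conv ν) := by
  have := hμ.isFiniteMeasure
  have := hν.isFiniteMeasure
  refine ⟨inferInstance, ?_⟩
  rw [Measure.conv, integrable_map_measure (by fun_prop) (by fun_prop)]
  exact (hμ.integrable_id.comp_fst ν).add (hν.integrable_id.comp_snd μ)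

lemma integral_id_conv [NormedSpace ℝ E] (hμ : HasFiniteFirstMoment μ)
    (hν : HasFiniteFirstMoment ν) :
    ∫ x, x ∂(μ.conv ν) = μ.real univ • ∫ x, x ∂ν + ν.real univ • ∫ x, x ∂μ := by
  have := hμ.isFiniteMeasure
  have := hν.isFiniteMeasure
  rw [Measure.conv, integral_map (by fun_prop) (by fun_prop),
    integral_add (hμ.integrable_id.comp_fst ν) (hν.integrable_id.comp_snd μ),
    integral_fun_fst (fun x : E => x), integral_fun_snd (fun x : E => x), add_comm]

end Convolution

section LinearCombination

variable {E ι : Type*} [NormedAddCommGroup E] [MeasurableSpace E]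

lemma HasFiniteFirstMoment.smul {μ : Measure E} (hμ : HasFiniteFirstMoment μ) {c : ENNReal}
    (hc : c ≠ ⊤) : HasFiniteFirstMoment (c • μ) :=
  have := hμ.isFiniteMeasure
  ⟨Measure.smul_finite μ hc, hμ.integrable_id.smul_measure hc⟩

lemma HasFiniteFirstMoment.sum {s : Finset ι} {μ : ι → Measure E}
    (hμ : ∀ i ∈ s, HasFiniteFirstMoment (μ i)) : HasFiniteFirstMoment (∑ i ∈ s, μ i) where
  isFiniteMeasure := ⟨by
    rw [Measure.finsetSum_apply]
    exact ENNReal.sum_lt_top.2 fun i hi => (hμ i hi).isFiniteMeasure.measure_univ_lt_top⟩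
  integrable_id := integrable_finsetSum_measure.2 fun i hi => (hμ i hi).integrable_id

end LinearCombination

section ConvolutionPolynomial

lemma HasFiniteFirstMoment.dirac_zero : HasFiniteFirstMoment (Measure.dirac (0 : ℝ)) :=
  ⟨inferInstance, integrable_dirac (by simp)⟩

lemma HasFiniteFirstMoment.convPow {μ : Measure ℝ} (hμ : HasFiniteFirstMoment μ) (n : ℕ) :
    HasFiniteFirstMoment (convPow μ n) := by
  induction n with
  | zero => exact .dirac_zero
  | succ n ih => exact ih.conv hμ

lemma HasFiniteFirstMoment.convList {l : List (Measure ℝ)}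
    (hl : ∀ μ ∈ l, HasFiniteFirstMoment μ) : HasFiniteFirstMoment (convList l) := by
  induction l with
  | nil => exact .dirac_zero
  | cons μ l ih =>
    rw [List.forall_mem_cons] at hl
    exact hl.1.conv (ih hl.2)

variable {m : ℕ} {μ : Fin m → Measure ℝ}

/-- The convolution monomial `μ₁^{*d₁} * ⋯ * μ_m^{*d_m}`, of which `convPoly` is a linear
combination. -/
noncomputable def convMonomial (μ : Fin m → Measure ℝ) (d : Fin m →₀ ℕ) : Measure ℝ :=
  convList (List.ofFn fun i => convPow (μ i) (d i))

lemma convPoly_eq_sum_convMonomial (P : MvPolynomial (Fin m) ℝ) (μ : Fin m → Measure ℝ) :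
    convPoly P μ =
      ∑ d ∈ P.support, ENNReal.ofReal (MvPolynomial.coeff d P) • convMonomial μ d :=
  rfl

lemma HasFiniteFirstMoment.convMonomial (hμ : ∀ i, HasFiniteFirstMoment (μ i)) (d : Fin m →₀ ℕ) :
    HasFiniteFirstMoment (convMonomial μ d) :=
  .convList <| List.forall_mem_ofFn_iff.2 fun i => (hμ i).convPow (d i)

lemma HasFiniteFirstMoment.convPoly (hμ : ∀ i, HasFiniteFirstMoment (μ i))
    (P : MvPolynomial (Fin m) ℝ) : HasFiniteFirstMoment (convPoly P μ) := by
  rw [convPoly_eq_sum_convMonomial]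
  exact .sum fun d _ => (convMonomial hμ d).smul ENNReal.ofReal_ne_top

end ConvolutionPolynomial

section MassMean

/-- The mass `a` and mean `b` of a measure, encoded as the dual number `a + b ε` so that convolution
of measures becomes multiplication. The mean is not normalised by the mass, and both components
can be junk unless `HasFiniteFirstMoment μ`. -/
noncomputable def massMean (μ : Measure ℝ) : DualNumber ℝ :=
  TrivSqZeroExt.inl (μ.real univ) + TrivSqZeroExt.inr (∫ x, x ∂μ)

@[simp]
lemma fst_massMean (μ : Measure ℝ) : (massMean μ).fst = μ.real univ := by
  simp [massMean]

@[simp]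
lemma snd_massMean (μ : Measure ℝ) : (massMean μ).snd = ∫ x, x ∂μ := by
  simp [massMean]

lemma massMean_dirac_zero : massMean (Measure.dirac 0) = 1 := by
  ext <;> simp

lemma massMean_conv {μ ν : Measure ℝ} (hμ : HasFiniteFirstMoment μ)
    (hν : HasFiniteFirstMoment ν) : massMean (μ.conv ν) = massMean μ * massMean ν := by
  have := hν.isFiniteMeasure
  ext
  · simp [measureReal_univ_conv]
  · simp [integral_id_conv hμ hν, mul_comm]

lemma massMean_smul (c : ENNReal) (μ : Measure ℝ) : massMean (c • μ) = c.toReal • massMean μ := by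
  ext <;> simp

lemma massMean_sum {ι : Type*} {s : Finset ι} {μ : ι → Measure ℝ}
    (hμ : ∀ i ∈ s, HasFiniteFirstMoment (μ i)) :
    massMean (∑ i ∈ s, μ i) = ∑ i ∈ s, massMean (μ i) := by
  ext
  · have (i : ι) (hi : i ∈ s) : μ i univ ≠ ⊤ :=
      (hμ i hi).isFiniteMeasure.measure_univ_lt_top.ne
    simp [Measure.real, Measure.finsetSum_apply, ENNReal.toReal_sum this, TrivSqZeroExt.fst_sum]
  · simp [integral_finsetSum_measure fun i hi => (hμ i hi).integrable_id, TrivSqZeroExt.snd_sum]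

lemma massMean_convPow {μ : Measure ℝ} (hμ : HasFiniteFirstMoment μ) (n : ℕ) :
    massMean (convPow μ n) = massMean μ ^ n := by
  induction n with
  | zero => rw [convPow, massMean_dirac_zero, pow_zero]
  | succ n ih => rw [convPow, massMean_conv (hμ.convPow n) hμ, ih, pow_succ]

lemma massMean_convList {l : List (Measure ℝ)} (hl : ∀ μ ∈ l, HasFiniteFirstMoment μ) :
    massMean (convList l) = (l.map massMean).prod := by
  induction l with
  | nil => exact massMean_dirac_zero
  | cons μ l ih =>
    rw [List.forall_mem_cons] at hl
    rw [convList, massMean_conv hl.1 (.convList hl.2), ih hl.2, List.map_cons, List.prod_cons]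

variable {m : ℕ} {μ : Fin m → Measure ℝ}

lemma massMean_convMonomial (hμ : ∀ i, HasFiniteFirstMoment (μ i)) (d : Fin m →₀ ℕ) :
    massMean (convMonomial μ d) = ∏ i, massMean (μ i) ^ d i := by
  rw [convMonomial, massMean_convList (List.forall_mem_ofFn_iff.2 fun i => (hμ i).convPow (d i)),
    List.map_ofFn, List.prod_ofFn]
  exact Finset.prod_congr rfl fun i _ => massMean_convPow (hμ i) (d i)

lemma massMean_convPoly (hμ : ∀ i, HasFiniteFirstMoment (μ i)) {P : MvPolynomial (Fin m) ℝ}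
    (hP : ∀ d, 0 ≤ MvPolynomial.coeff d P) :
    massMean (convPoly P μ) = MvPolynomial.aeval (fun i => massMean (μ i)) P := by
  calc massMean (convPoly P μ)
    _ = ∑ d ∈ P.support,
          massMean (ENNReal.ofReal (MvPolynomial.coeff d P) • convMonomial μ d) := by
      rw [convPoly_eq_sum_convMonomial]
      exact massMean_sum fun d _ => (HasFiniteFirstMoment.convMonomial hμ d).smul
        ENNReal.ofReal_ne_top
    _ = ∑ d ∈ P.support, MvPolynomial.coeff d P • ∏ i, massMean (μ i) ^ d i := by
      simp only [massMean_smul, massMean_convMonomial hμ, ENNReal.toReal_ofReal (hP _)]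
    _ = MvPolynomial.aeval (fun i => massMean (μ i)) P := by
      simp only [MvPolynomial.aeval_def, MvPolynomial.eval₂_eq', Algebra.smul_def]

end MassMean

section ConvexOrder

variable {μ ν : Measure ℝ}

lemma ConvexOrder.integral_eq (h : ConvexOrder μ ν) {φ : ℝ → ℝ} (hconvex : ConvexOn ℝ univ φ)
    (hconcave : ConcaveOn ℝ univ φ) (hμ : Integrable φ μ) (hν : Integrable φ ν) :
    ∫ x, φ x ∂μ = ∫ x, φ x ∂ν := by
  refine (h φ hconvex hμ hν).antisymm ?_
  simpa [integral_neg] using h (-φ) hconcave.neg hμ.neg hν.neg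

lemma ConvexOrder.massMean_eq (h : ConvexOrder μ ν) (hμ : HasFiniteFirstMoment μ)
    (hν : HasFiniteFirstMoment ν) : massMean μ = massMean ν := by
  have := hμ.isFiniteMeasure
  have := hν.isFiniteMeasure
  ext
  · simpa using h.integral_eq (convexOn_const 1 convex_univ) (concaveOn_const 1 convex_univ)
      (integrable_const 1) (integrable_const 1)
  · simpa using h.integral_eq (convexOn_id convex_univ) (concaveOn_id convex_univ)
      hμ.integrable_id hν.integrable_id

end ConvexOrder

/-- Proposition 3.1: if P(μ₁,…,μ_m) ≼ₓ Q(μ₁,…,μ_m) for convolution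
polynomials with non-negative coefficients, then P(a) = Q(a) and the directional
derivatives of P and Q along b = (∫x dμᵢ)ᵢ at a = (μᵢ(ℝ))ᵢ coincide. -/
theorem stmt9 (m : ℕ) (μ : Fin m → Measure ℝ) [∀ i, IsFiniteMeasure (μ i)]
    (hint : ∀ i, Integrable (fun x : ℝ => |x|) (μ i))
    (a b : Fin m → ℝ)
    (hA : ∀ i, a i = (μ i Set.univ).toReal) (hB : ∀ i, b i = ∫ x, x ∂(μ i))
    (P Q : MvPolynomial (Fin m) ℝ)
    (hP : ∀ d, 0 ≤ MvPolynomial.coeff d P) (hQ : ∀ d, 0 ≤ MvPolynomial.coeff d Q)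
    (hord : ConvexOrder (convPoly P μ) (convPoly Q μ)) :
    MvPolynomial.eval a P = MvPolynomial.eval a Q ∧
      ∑ i, b i * MvPolynomial.eval a (MvPolynomial.pderiv i P) =
        ∑ i, b i * MvPolynomial.eval a (MvPolynomial.pderiv i Q) := by
  have hμ (i : Fin m) : HasFiniteFirstMoment (μ i) :=
    ⟨inferInstance, (integrable_norm_iff (by fun_prop)).1 (hint i)⟩
  have hmass (i : Fin m) : (massMean (μ i)).fst = a i := (fst_massMean (μ i)).trans (hA i).symm
  have hmean (i : Fin m) : (massMean (μ i)).snd = b i := (snd_massMean (μ i)).trans (hB i).symm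
  have haeval : MvPolynomial.aeval (fun i => massMean (μ i)) P =
      MvPolynomial.aeval (fun i => massMean (μ i)) Q := by
    rw [← massMean_convPoly hμ hP, ← massMean_convPoly hμ hQ]
    exact hord.massMean_eq (.convPoly hμ P) (.convPoly hμ Q)
  constructor
  · simpa only [fst_mvPolynomial_aeval, hmass] using congrArg TrivSqZeroExt.fst haeval
  · simpa only [snd_mvPolynomial_aeval, hmass, hmean, smul_eq_mul, mul_comm] using
      congrArg TrivSqZeroExt.snd haeval
end
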